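/- Levin–Schnorr theorem: A ∈ 2^ω is Martin-Löf random if and only if there is some c ∈ ℕ such that K(A↾n) ≥ n − c for all n ∈ ℕ. -/

import Mathlib

open scoped ENNReal NNReal Classical

namespace AR

/-- Elements of Cantor space `2^ω`: infinite binary sequences. -/
abbrev Seq := ℕ → Bool

/-- Finite binary strings `2^{<ω}`. -/
abbrev Str := List Bool

/-- The first `n` bits of a sequence `A`, as a finite string (`A↾n`). -/
def pre (A : Seq) (n : ℕ) : Str := List.ofFn fun i : Fin n => A i

/-- The basic clopen cylinder `[σ]` of all sequences extending `σ`. -/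
def cyl (σ : Str) : Set Seq := {A | pre A σ.length = σ}

/-- A measure on Cantor space is *fair-coin* if every cylinder `[σ]` has measure
`2^{-|σ|}`; this uniquely characterizes the usual product measure `μ` on `2^ω`. -/
def FairCoin (μ : MeasureTheory.Measure Seq) : Prop :=
  ∀ σ : Str, μ (cyl σ) = (2 : ℝ≥0∞)⁻¹ ^ σ.length

/-- A machine is a partial computable function `2^{<ω} ⇀ 2^{<ω}`. -/
def IsMachine (M : Str →. Str) : Prop := Partrec M

/-- Kolmogorov complexity of `τ` relative to the machine `M`:
`C_M(τ) = min{|σ| : M(σ)↓ = τ}`, with value `∞` if no such `σ` exists. -/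
noncomputable def Cplx (M : Str →. Str) (τ : Str) : ℕ∞ :=
  sInf ((fun σ : Str => (σ.length : ℕ∞)) '' {σ | τ ∈ M σ})

/-- A universal machine: a machine simulating every machine up to an additive
constant.  `Cplx U` for universal `U` is plain Kolmogorov complexity `C`. -/
def UniversalMachine (U : Str →. Str) : Prop :=
  IsMachine U ∧ ∀ M : Str →. Str, IsMachine M → ∃ c : ℕ, ∀ τ, Cplx U τ ≤ Cplx M τ + c

/-- A set of strings is prefix-free if none of its elements is a proper initial
segment of another. -/
def PrefixFree (S : Set Str) : Prop :=
  ∀ σ ∈ S, ∀ τ ∈ S, σ <+: τ → σ = τ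

/-- A prefix-free machine: a machine whose domain is prefix-free. -/
def PrefixFreeMachine (M : Str →. Str) : Prop :=
  IsMachine M ∧ PrefixFree {σ | (M σ).Dom}

/-- A universal prefix-free machine.  `Cplx U` for such `U` is prefix-free
Kolmogorov complexity `K`. -/
def UniversalPFMachine (U : Str →. Str) : Prop :=
  PrefixFreeMachine U ∧
    ∀ M : Str →. Str, PrefixFreeMachine M → ∃ c : ℕ, ∀ τ, Cplx U τ ≤ Cplx M τ + c

/-- A c.e. (recursively enumerable) predicate. -/
def CEPred {α} [Primcodable α] (p : α → Prop) : Prop :=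
  Partrec fun a => Part.assert (p a) fun _ => Part.some ()

/-- A Martin-Löf test: a sequence of uniformly Σ⁰₁ classes `U i`, given by a single
c.e. set `W` of pairs, with `μ (U i) ≤ 2^{-i}`. -/
def MLTest (μ : MeasureTheory.Measure Seq) (U : ℕ → Set Seq) : Prop :=
  ∃ W : Set (ℕ × Str), CEPred (· ∈ W) ∧
    (∀ i, U i = ⋃ σ ∈ {σ : Str | (i, σ) ∈ W}, cyl σ) ∧
    ∀ i, μ (U i) ≤ (2 : ℝ≥0∞)⁻¹ ^ i

/-- `A` is Martin-Löf random if it passes every Martin-Löf test. -/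
def MLRandom (μ : MeasureTheory.Measure Seq) (A : Seq) : Prop :=
  ∀ U : ℕ → Set Seq, MLTest μ U → A ∉ ⋂ i, U i

/-! If a prefix-free machine compresses initial segments of `A` by arbitrarily many bits, then the
open classes generated by the strings compressed by more than `k` bits form a Martin-Löf test that
`A` fails: by Kraft's inequality the `k`-th class has measure at most `2⁻ᵏ`.

Conversely, generate the `(2k + 1)`-st class of a test by a prefix-free set and request, for each
generator `σ`, a description of length `|σ| - k`. The weights of these requests add up to at most
`∑ₖ 2ᵏ · 2⁻²ᵏ⁻¹ = 1`. By the Kraft–Chaitin theorem some prefix-free machine meets all of them up to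
one extra bit, and hence compresses the initial segments of every `A` that fails the test. -/

section CEPredicates

theorem mem_rfindOpt_iff_of_unique {α : Type*} {f : ℕ → Option α}
    (hf : ∀ m n a b, f m = some a → f n = some b → a = b) {a : α} :
    a ∈ Nat.rfindOpt f ↔ ∃ n, f n = some a := by
  refine ⟨Nat.rfindOpt_spec, fun ⟨n, hn⟩ => ?_⟩
  obtain ⟨b, hb⟩ := Part.dom_iff_mem.1 (Nat.rfindOpt_dom.2 ⟨n, a, hn⟩)
  obtain ⟨m, hm⟩ := Nat.rfindOpt_spec hb
  exact hf m n b a hm hn ▸ hb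

variable {α β : Type*} [Primcodable α] [Primcodable β]

theorem primrecPred_exists_lt {f : α → ℕ} {R : ℕ → α → Prop} (hR : PrimrecRel R)
    (hf : Primrec f) : PrimrecPred fun a => ∃ m < f a, R m a :=
  (hR.exists_mem_list.comp (Primrec.list_range.comp hf) Primrec.id).of_eq fun a => by simp

theorem primrecPred_forall_lt {f : α → ℕ} {R : ℕ → α → Prop} (hR : PrimrecRel R)
    (hf : Primrec f) : PrimrecPred fun a => ∀ m < f a, R m a :=
  (hR.forall_mem_list.comp (Primrec.list_range.comp hf) Primrec.id).of_eq fun a => by simp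

theorem cePred_mem {f : α →. β} {g : α → β} (hf : Partrec f) (hg : Computable g) :
    CEPred fun a => g a ∈ f a := by
  have hguard : Computable₂ fun a b => if b = g a then some () else none :=
    ((Primrec.eq.decide.to_comp.comp Computable.snd (hg.comp Computable.fst)).cond
      (Computable.const (some ())) (Computable.const none)).of_eq fun _ => Bool.cond_decide ..
  refine REPred.of_eq (hf.bind hguard.ofOption.to₂).dom_re fun a => ?_
  simp [Part.dom_iff_mem, eq_comm]

theorem CEPred.and {p q : α → Prop} (hp : CEPred p) (hq : CEPred q) :
    CEPred fun a => p a ∧ q a :=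
  REPred.of_eq (hp.bind (hq.comp Computable.fst).to₂).dom_re fun a => by simp [Part.assert]

theorem CEPred.exists_primrec_stages {p : α → Prop} (hp : CEPred p) :
    ∃ q : ℕ → α → Prop, PrimrecRel q ∧ (∀ a, Monotone fun s => q s a) ∧
      ∀ a, p a ↔ ∃ s, q s a := by
  obtain ⟨c, hc⟩ := Nat.Partrec.Code.exists_code.1 hp
  refine ⟨fun s a => (c.evaln s (Encodable.encode a)).isSome, ?_, fun a s t hst hs => ?_,
    fun a => ?_⟩
  · exact Primrec.eq.comp (Primrec.option_isSome.comp (Nat.Partrec.Code.primrec_evaln.comp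
      ((Primrec.fst.pair (Primrec.const c)).pair (Primrec.encode.comp Primrec.snd))))
      (Primrec.const true)
  · obtain ⟨x, hx⟩ := Option.isSome_iff_exists.1 hs
    exact Option.isSome_iff_exists.2 ⟨x, Nat.Partrec.Code.evaln_mono hst hx⟩
  · have hdom : p a ↔ (c.eval (Encodable.encode a)).Dom := by simp [hc, Part.assert]
    simp only [hdom, Part.dom_iff_mem, Nat.Partrec.Code.evaln_complete,
      Option.isSome_iff_exists, Option.mem_def]
    exact exists_comm

/-- Listing `a` only at the code of `(s, a)`, for the least stage `s` that accepts `a`, avoids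
repetitions. -/
theorem CEPred.exists_primrec_enumeration {p : α → Prop} (hp : CEPred p) :
    ∃ r : ℕ → Option α, Primrec r ∧ (∀ m n a, r m = some a → r n = some a → m = n) ∧
      ∀ a, p a ↔ ∃ n, r n = some a := by
  obtain ⟨q, hq, -, hpq⟩ := hp.exists_primrec_stages
  let first : ℕ × α → Prop := fun x => q x.1 x.2 ∧ ∀ t < x.1, ¬ q t x.2
  have hfirst : PrimrecPred first :=
    hq.and (primrecPred_forall_lt (hq.comp Primrec.fst (Primrec.snd.comp Primrec.snd)).not
      Primrec.fst)
  let r : ℕ → Option α := fun n =>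
    (Encodable.decode₂ (ℕ × α) n).bind fun x => if first x then some x.2 else none
  have hr : ∀ n a, r n = some a ↔ ∃ s, first (s, a) ∧ Encodable.encode (s, a) = n := by
    simp [r, Option.bind_eq_some_iff, Encodable.decode₂_eq_some, and_comm]
  refine ⟨r, ?_, fun m n a hm hn => ?_, fun a => ?_⟩
  · exact Primrec.option_bind Primrec.decode₂ (Primrec.ite (hfirst.comp Primrec.snd)
      (Primrec.option_some.comp (Primrec.snd.comp Primrec.snd)) (Primrec.const none))
  · obtain ⟨s, ⟨hs, hs'⟩, rfl⟩ := (hr m a).1 hm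
    obtain ⟨t, ⟨ht, ht'⟩, rfl⟩ := (hr n a).1 hn
    have hst : s = t :=
      (le_of_not_gt fun h => hs' t h ht).antisymm (le_of_not_gt fun h => ht' s h hs)
    rw [hst]
  · simp only [hpq, hr]
    rw [exists_comm]
    simp only [exists_and_left, exists_eq', and_true]
    exact ⟨fun h => ⟨Nat.find h, Nat.find_spec h, fun t => Nat.find_min h⟩,
      fun ⟨s, hs, _⟩ => ⟨s, hs⟩⟩

theorem CEPred.exists {p : α × β → Prop} (hp : CEPred p) : CEPred fun a => ∃ b, p (a, b) := by
  obtain ⟨r, hr, -, hpr⟩ := hp.exists_primrec_enumeration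
  let search : α → ℕ → Option (α × β) := fun a n =>
    (r n).bind (Option.guard fun y : α × β => decide (y.1 = a))
  have hsearch : Primrec₂ search :=
    Primrec.option_bind (hr.comp Primrec.snd) (Primrec.option_guard
      (p := fun (x : (α × ℕ) × (α × β)) (y : α × β) => y.1 = x.1.1)
      (Primrec.eq.comp (Primrec.fst.comp Primrec.snd)
        (Primrec.fst.comp (Primrec.fst.comp Primrec.fst))) Primrec.snd)
  refine REPred.of_eq (Partrec.rfindOpt hsearch.to_comp).dom_re fun a => ?_
  simp only [Nat.rfindOpt_dom, search, Option.mem_def, Option.bind_eq_some_iff,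
    Option.guard_eq_some_iff, decide_eq_true_eq, hpr]
  constructor
  · rintro ⟨n, -, y, hy, rfl, rfl⟩
    exact ⟨y.2, n, hy⟩
  · rintro ⟨b, n, hn⟩
    exact ⟨n, (a, b), (a, b), hn, rfl, rfl⟩

end CEPredicates

section OpenClasses

theorem length_pre (A : Seq) (n : ℕ) : (pre A n).length = n := List.length_ofFn

theorem take_pre (A : Seq) {m n : ℕ} (h : m ≤ n) : (pre A n).take m = pre A m :=
  List.ext_getElem (by simp [pre, h]) fun i _ _ => by simp [pre]

theorem measurableSet_cyl (σ : Str) : MeasurableSet (cyl σ) :=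
  have hpre : Measurable fun (A : Seq) (i : Fin σ.length) => A i :=
    measurable_pi_lambda _ fun i => measurable_pi_apply (i : ℕ)
  hpre (MeasurableSet.of_discrete (s := {f : Fin σ.length → Bool | List.ofFn f = σ}))

/-- The open class `[S]` of all sequences with an initial segment in `S`. -/
def openClass (S : Set Str) : Set Seq := ⋃ σ ∈ S, cyl σ

theorem mem_openClass_iff {S : Set Str} {A : Seq} : A ∈ openClass S ↔ ∃ n, pre A n ∈ S := by
  simp only [openClass, Set.mem_iUnion₂]
  constructor
  · rintro ⟨σ, hσ, hA : pre A _ = σ⟩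
    exact ⟨σ.length, by rwa [hA]⟩
  · rintro ⟨n, hn⟩
    exact ⟨pre A n, hn, congrArg (pre A) (length_pre A n)⟩

/-- The strings in `S` none of whose proper initial segments is in `S`. -/
def minimalStrings (S : Set Str) : Set Str := {σ ∈ S | ∀ m < σ.length, σ.take m ∉ S}

theorem prefixFree_minimalStrings (S : Set Str) : PrefixFree (minimalStrings S) := by
  intro σ hσ τ hτ hστ
  refine hστ.eq_of_length (hστ.length_le.antisymm (not_lt.1 fun hlt => hτ.2 _ hlt ?_))
  rw [← List.prefix_iff_eq_take.1 hστ]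
  exact hσ.1

theorem openClass_minimalStrings (S : Set Str) : openClass (minimalStrings S) = openClass S := by
  ext A
  simp only [mem_openClass_iff]
  refine ⟨fun ⟨n, hn⟩ => ⟨n, hn.1⟩, fun h => ⟨Nat.find h, Nat.find_spec h, fun m hm => ?_⟩⟩
  rw [length_pre] at hm
  rw [take_pre A hm.le]
  exact Nat.find_min h hm

theorem primrecPred_mem_minimalStrings {α : Type*} [Primcodable α] {V : Set (α × Str)}
    (hV : PrimrecPred (· ∈ V)) :
    PrimrecPred fun x : α × Str => x.2 ∈ minimalStrings {σ | (x.1, σ) ∈ V} := by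
  have hnotMem : PrimrecRel fun (m : ℕ) (x : α × Str) => (x.1, x.2.take m) ∉ V :=
    (hV.comp ((Primrec.fst.comp Primrec.snd).pair
      (Primrec.list_take.comp Primrec.fst (Primrec.snd.comp Primrec.snd)))).not
  exact hV.and (primrecPred_forall_lt hnotMem (Primrec.list_length.comp Primrec.snd))

/-- A string enters `V` when one of its initial segments is enumerated into `W` by a stage at most
its length, so every sequence in `[W]` still has an initial segment in `V`. -/
theorem CEPred.exists_primrecPred_openClass_eq {α : Type*} [Primcodable α] {W : Set (α × Str)}
    (hW : CEPred (· ∈ W)) :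
    ∃ V : Set (α × Str), PrimrecPred (· ∈ V) ∧
      ∀ a, openClass {σ | (a, σ) ∈ V} = openClass {σ | (a, σ) ∈ W} := by
  obtain ⟨q, hq, hqmono, hWq⟩ := hW.exists_primrec_stages
  refine ⟨{x | ∃ m < x.2.length + 1, q x.2.length (x.1, x.2.take m)}, ?_, fun a => ?_⟩
  · have hlen : Primrec fun x : α × Str => x.2.length := Primrec.list_length.comp Primrec.snd
    have hstage : PrimrecRel fun (m : ℕ) (x : α × Str) => q x.2.length (x.1, x.2.take m) :=
      hq.comp (hlen.comp Primrec.snd) ((Primrec.fst.comp Primrec.snd).pair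
        (Primrec.list_take.comp Primrec.fst (Primrec.snd.comp Primrec.snd)))
    exact primrecPred_exists_lt hstage (Primrec.succ.comp hlen)
  · ext A
    simp only [mem_openClass_iff, Set.mem_ofPred_eq, length_pre, hWq]
    constructor
    · rintro ⟨n, m, hm, hq⟩
      exact ⟨m, n, take_pre A (Nat.le_of_lt_succ hm) ▸ hq⟩
    · rintro ⟨n, s, hs⟩
      refine ⟨max s n, n, Nat.lt_succ_of_le (le_max_right s n), ?_⟩
      rw [take_pre A (le_max_right s n)]
      exact hqmono _ (le_max_left s n) hs

theorem PrefixFree.pairwiseDisjoint_cyl {S : Set Str} (hS : PrefixFree S) :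
    S.PairwiseDisjoint cyl := by
  intro σ hσ τ hτ hne
  refine Set.disjoint_left.2 fun A (hAσ : pre A _ = σ) (hAτ : pre A _ = τ) => hne ?_
  wlog h : σ.length ≤ τ.length generalizing σ τ
  · exact (this hτ hσ hne.symm hAτ hAσ (le_of_not_ge h)).symm
  refine hS σ hσ τ hτ ?_
  rw [← hAσ, ← take_pre A h, hAτ]
  exact List.take_prefix _ _

variable {μ : MeasureTheory.Measure Seq}

theorem FairCoin.isProbabilityMeasure (hμ : FairCoin μ) :
    MeasureTheory.IsProbabilityMeasure μ := by
  have huniv : cyl [] = Set.univ := Set.eq_univ_of_forall fun _ => rfl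
  exact ⟨by simpa [huniv] using hμ []⟩

theorem FairCoin.measure_openClass (hμ : FairCoin μ) {S : Set Str} (hS : PrefixFree S) :
    μ (openClass S) = ∑' σ : S, (2 : ℝ≥0∞)⁻¹ ^ σ.1.length := by
  rw [openClass, MeasureTheory.measure_biUnion S.to_countable hS.pairwiseDisjoint_cyl
    fun σ _ => measurableSet_cyl σ]
  exact tsum_congr fun σ => hμ σ

theorem FairCoin.tsum_le_one (hμ : FairCoin μ) {S : Set Str} (hS : PrefixFree S) :
    ∑' σ : S, (2 : ℝ≥0∞)⁻¹ ^ σ.1.length ≤ 1 := by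
  have := hμ.isProbabilityMeasure
  exact hμ.measure_openClass hS ▸ MeasureTheory.prob_le_one

theorem FairCoin.le_length_of_measure_cyl_le (hμ : FairCoin μ) {i : ℕ} {σ : Str}
    (h : μ (cyl σ) ≤ 2⁻¹ ^ i) : i ≤ σ.length := by
  rw [hμ, ← ENNReal.inv_pow, ← ENNReal.inv_pow, ENNReal.inv_le_inv] at h
  exact (Nat.pow_le_pow_iff_right one_lt_two).1 (by exact_mod_cast h)

end OpenClasses

section Compression

theorem cplx_lt_iff {M : Str →. Str} {τ : Str} {x : ℕ∞} :
    Cplx M τ < x ↔ ∃ σ, τ ∈ M σ ∧ (σ.length : ℕ∞) < x := by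
  simp [Cplx, sInf_lt_iff]

theorem cplx_le_length {M : Str →. Str} {σ τ : Str} (h : τ ∈ M σ) : Cplx M τ ≤ σ.length :=
  sInf_le ⟨σ, h, rfl⟩

/-- The initial segments of `A` are incompressible for `M`: `C_M(A↾n) ≥ n - c` for some `c` and
all `n`, written without subtraction. -/
def Incompressible (M : Str →. Str) (A : Seq) : Prop :=
  ∃ c : ℕ, ∀ n : ℕ, (n : ℕ∞) ≤ Cplx M (pre A n) + c

theorem Incompressible.of_cplx_le_add {M N : Str →. Str} {A : Seq} (hA : Incompressible N A)
    (h : ∃ d : ℕ, ∀ τ, Cplx N τ ≤ Cplx M τ + d) : Incompressible M A := by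
  obtain ⟨c, hc⟩ := hA
  obtain ⟨d, hd⟩ := h
  refine ⟨d + c, fun n => (hc n).trans ?_⟩
  rw [Nat.cast_add, ← add_assoc]
  gcongr
  exact hd _

/-- The strings that `M` compresses by more than `k` bits. -/
def compressed (M : Str →. Str) (k : ℕ) : Set Str := {σ | Cplx M σ + k < σ.length}

theorem mem_compressed_iff {M : Str →. Str} {k : ℕ} {σ : Str} :
    σ ∈ compressed M k ↔ ∃ p, σ ∈ M p ∧ p.length + k < σ.length := by
  simp only [compressed, Set.mem_ofPred_eq, ← lt_tsub_iff_right, cplx_lt_iff]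
  simp only [lt_tsub_iff_right]
  norm_cast

theorem mem_iInter_openClass_compressed_iff {M : Str →. Str} {A : Seq} :
    A ∈ ⋂ k, openClass (compressed M k) ↔ ¬ Incompressible M A := by
  simp [mem_openClass_iff, compressed, Incompressible, length_pre]

theorem IsMachine.cePred_compressed {M : Str →. Str} (hM : IsMachine M) :
    CEPred fun x : ℕ × Str => x.2 ∈ compressed M x.1 := by
  have hmem : CEPred fun y : (ℕ × Str) × Str => y.1.2 ∈ M y.2 :=
    cePred_mem (hM.comp Computable.snd) (Computable.snd.comp Computable.fst)
  have hlen : PrimrecPred fun y : (ℕ × Str) × Str => y.2.length + y.1.1 < y.1.2.length :=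
    Primrec.nat_lt.comp
      (Primrec.nat_add.comp (Primrec.list_length.comp Primrec.snd)
        (Primrec.fst.comp Primrec.fst))
      (Primrec.list_length.comp (Primrec.snd.comp Primrec.fst))
  exact REPred.of_eq (hmem.and hlen.computablePred.to_re).exists fun x =>
    (mem_compressed_iff (M := M) (k := x.1) (σ := x.2)).symm

variable {μ : MeasureTheory.Measure Seq}

theorem PrefixFreeMachine.measure_compressed_le (hμ : FairCoin μ) {M : Str →. Str}
    (hM : PrefixFreeMachine M) (k : ℕ) : μ (openClass (compressed M k)) ≤ 2⁻¹ ^ k := by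
  choose! p hpM hplen using fun σ (hσ : σ ∈ compressed M k) => mem_compressed_iff.1 hσ
  let code : compressed M k → {π | (M π).Dom} := fun σ =>
    ⟨p σ, Part.dom_iff_mem.2 ⟨σ, hpM σ σ.2⟩⟩
  have hcode : Function.Injective code := fun σ τ h => by
    have hp : p σ = p τ := congrArg Subtype.val h
    exact Subtype.ext (Part.mem_unique (hpM σ σ.2) (hp ▸ hpM τ τ.2))
  calc μ (openClass (compressed M k))
      ≤ ∑' σ : compressed M k, μ (cyl σ) :=
        MeasureTheory.measure_biUnion_le μ (Set.to_countable _) cyl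
    _ ≤ ∑' σ : compressed M k, 2⁻¹ ^ (code σ).1.length * 2⁻¹ ^ k := by
        refine ENNReal.tsum_le_tsum fun σ => ?_
        rw [hμ, ← pow_add]
        exact pow_le_pow_right_of_le_one' (by simp) (hplen σ σ.2).le
    _ ≤ 1 * 2⁻¹ ^ k := by
        rw [ENNReal.tsum_mul_right]
        gcongr
        exact (ENNReal.tsum_comp_le_tsum_of_injective hcode
          fun π => (2 : ℝ≥0∞)⁻¹ ^ π.1.length).trans (hμ.tsum_le_one hM.2)
    _ = 2⁻¹ ^ k := one_mul _

theorem MLRandom.incompressible (hμ : FairCoin μ) {A : Seq} (hA : MLRandom μ A) {M : Str →. Str}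
    (hM : PrefixFreeMachine M) : Incompressible M A := by
  by_contra hnot
  exact hA (fun k => openClass (compressed M k))
    ⟨{x | x.2 ∈ compressed M x.1}, hM.1.cePred_compressed, fun _ => rfl,
      hM.measure_compressed_le hμ⟩ (mem_iInter_openClass_compressed_iff.2 hnot)

end Compression

section DyadicIntervals

/-- The number with binary expansion `σ`, most significant bit first. -/
def binVal (σ : Str) : ℕ := σ.foldl (fun v b => 2 * v + b.toNat) 0

theorem binVal_concat (σ : Str) (b : Bool) : binVal (σ ++ [b]) = 2 * binVal σ + b.toNat := by
  simp [binVal]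

theorem binVal_append (σ ρ : Str) :
    binVal (σ ++ ρ) = binVal σ * 2 ^ ρ.length + binVal ρ := by
  induction ρ using List.reverseRecOn with
  | nil => simp [binVal]
  | append_singleton ρ b ih =>
    rw [← List.append_assoc, binVal_concat, ih, binVal_concat, List.length_append,
      List.length_singleton]
    ring

theorem binVal_lt_two_pow (σ : Str) : binVal σ < 2 ^ σ.length := by
  induction σ using List.reverseRecOn with
  | nil => simp [binVal]
  | append_singleton σ b ih =>
    have hb := b.toNat_le
    rw [binVal_concat, List.length_append, List.length_singleton, pow_succ]
    lia

theorem exists_binVal_eq {n v : ℕ} (hv : v < 2 ^ n) : ∃ σ : Str, σ.length = n ∧ binVal σ = v := by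
  induction n generalizing v with
  | zero => exact ⟨[], rfl, (Nat.lt_one_iff.1 hv).symm⟩
  | succ n ih =>
    obtain ⟨σ, hlen, hσ⟩ := ih (v := v / 2) (by rw [pow_succ] at hv; lia)
    refine ⟨σ ++ [v.bodd], by simp [hlen], ?_⟩
    rw [binVal_concat, hσ, ← Nat.div2_val, add_comm]
    exact Nat.bodd_add_div2 v

theorem primrec_binVal : Primrec binVal :=
  Primrec.list_foldl Primrec.id (Primrec.const 0)
    (Primrec.nat_add.comp
      (Primrec.nat_mul.comp (Primrec.const 2) (Primrec.fst.comp Primrec.snd))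
      ((Primrec.dom_finite Bool.toNat).comp (Primrec.snd.comp Primrec.snd))).to₂

theorem primrec_two_pow : Primrec fun n : ℕ => 2 ^ n :=
  (Primrec.nat_rec₁ 1 (Primrec.nat_mul.comp Primrec.snd (Primrec.const 2)).to₂).of_eq fun n => by
    induction n with
    | zero => rfl
    | succ n ih => simp only [ih, pow_succ]

/-- The half-open interval of the reals in `[0, 1)` whose binary expansion extends `σ`. -/
noncomputable def dyadicInterval (σ : Str) : Set ℝ≥0 :=
  Set.Ico (binVal σ / 2 ^ σ.length) ((binVal σ + 1) / 2 ^ σ.length)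

theorem nonempty_dyadicInterval (σ : Str) : (dyadicInterval σ).Nonempty :=
  Set.nonempty_Ico.2 (by gcongr; exact lt_add_one _)

theorem dyadicInterval_subset_of_prefix {σ τ : Str} (h : σ <+: τ) :
    dyadicInterval τ ⊆ dyadicInterval σ := by
  obtain ⟨ρ, rfl⟩ := h
  have hρ : (binVal ρ + 1 : ℝ≥0) ≤ 2 ^ ρ.length := by exact_mod_cast binVal_lt_two_pow ρ
  refine Set.Ico_subset_Ico ?_ ?_ <;>
    rw [div_le_div_iff₀ (by positivity) (by positivity), List.length_append, binVal_append,
      pow_add, Nat.cast_add, Nat.cast_mul, Nat.cast_pow, Nat.cast_ofNat]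
  · calc (binVal σ * (2 ^ σ.length * 2 ^ ρ.length) : ℝ≥0)
        = binVal σ * 2 ^ ρ.length * 2 ^ σ.length := by ring
      _ ≤ (binVal σ * 2 ^ ρ.length + binVal ρ) * 2 ^ σ.length := by gcongr; exact le_self_add
  · calc ((binVal σ * 2 ^ ρ.length + binVal ρ + 1) * 2 ^ σ.length : ℝ≥0)
        = (binVal σ * 2 ^ ρ.length + (binVal ρ + 1)) * 2 ^ σ.length := by ring
      _ ≤ (binVal σ * 2 ^ ρ.length + 2 ^ ρ.length) * 2 ^ σ.length := by gcongr
      _ = (binVal σ + 1) * (2 ^ σ.length * 2 ^ ρ.length) := by ring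

/-- Half the length suffices: rounding `x` up to a multiple of `2⁻ᵈ⁻¹` leaves room for an interval
of that length. -/
theorem exists_dyadicInterval_subset {x : ℝ≥0} {d : ℕ} (hx : x + 2⁻¹ ^ d ≤ 1) :
    ∃ σ : Str, σ.length = d + 1 ∧ dyadicInterval σ ⊆ Set.Ico x (x + 2⁻¹ ^ d) := by
  set v := ⌈x * 2 ^ (d + 1)⌉₊
  have hpos : (0 : ℝ≥0) < 2 ^ (d + 1) := by positivity
  have hle : x * 2 ^ (d + 1) ≤ v := Nat.le_ceil _
  have hroom : (v + 1 : ℝ≥0) ≤ (x + 2⁻¹ ^ d) * 2 ^ (d + 1) :=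
    calc (v + 1 : ℝ≥0) ≤ x * 2 ^ (d + 1) + 1 + 1 := by
          gcongr; exact (Nat.ceil_lt_add_one zero_le).le
      _ = (x + 2⁻¹ ^ d) * 2 ^ (d + 1) := by
          rw [add_mul, pow_succ (2 : ℝ≥0) d, ← mul_assoc, ← mul_assoc, ← mul_pow,
            inv_mul_cancel₀ two_ne_zero, one_pow, add_assoc, one_add_one_eq_two, one_mul]
  have hlt : v < 2 ^ (d + 1) := by
    have : (v + 1 : ℝ≥0) ≤ 2 ^ (d + 1) := hroom.trans (mul_le_of_le_one_left hpos.le hx)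
    exact_mod_cast this
  obtain ⟨σ, hlen, hσ⟩ := exists_binVal_eq hlt
  refine ⟨σ, hlen, Set.Ico_subset_Ico ?_ ?_⟩
  · rwa [hσ, hlen, le_div_iff₀ hpos]
  · rwa [hσ, hlen, div_le_iff₀ hpos]

end DyadicIntervals

section KraftChaitin

/-- A primitive recursive sequence of nonnegative dyadic rationals, given by its numerators and
the exponents of its denominators. -/
def PrimrecDyadic (x : ℕ → ℝ≥0) : Prop :=
  ∃ a e : ℕ → ℕ, Primrec a ∧ Primrec e ∧ ∀ j, x j = a j / 2 ^ e j

theorem PrimrecDyadic.comp {x : ℕ → ℝ≥0} (hx : PrimrecDyadic x) {f : ℕ → ℕ} (hf : Primrec f) :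
    PrimrecDyadic fun j => x (f j) := by
  obtain ⟨a, e, ha, he, hxae⟩ := hx
  exact ⟨_, _, ha.comp hf, he.comp hf, fun j => hxae (f j)⟩

theorem PrimrecDyadic.sum_range {x : ℕ → ℝ≥0} (hx : PrimrecDyadic x) :
    PrimrecDyadic fun j => ∑ i ∈ Finset.range j, x i := by
  obtain ⟨a, e, ha, he, hxae⟩ := hx
  let addFrac : ℕ → ℕ × ℕ → ℕ × ℕ := fun i s => (s.1 * 2 ^ e i + a i * 2 ^ s.2, s.2 + e i)
  have haddFrac : Primrec₂ addFrac := by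
    have hfst : Primrec fun x : ℕ × ℕ × ℕ => x.2.1 := Primrec.fst.comp Primrec.snd
    have hsnd : Primrec fun x : ℕ × ℕ × ℕ => x.2.2 := Primrec.snd.comp Primrec.snd
    exact (Primrec.nat_add.comp
      (Primrec.nat_mul.comp hfst (primrec_two_pow.comp (he.comp Primrec.fst)))
      (Primrec.nat_mul.comp (ha.comp Primrec.fst) (primrec_two_pow.comp hsnd))).pair
      (Primrec.nat_add.comp hsnd (he.comp Primrec.fst))
  let s : ℕ → ℕ × ℕ := fun j => j.rec (0, 0) addFrac
  have hs : Primrec s := Primrec.nat_rec₁ (0, 0) haddFrac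
  refine ⟨_, _, Primrec.fst.comp hs, Primrec.snd.comp hs, fun j => ?_⟩
  induction j with
  | zero => simp [s]
  | succ j ih =>
    have hsucc : s (j + 1) = addFrac j (s j) := rfl
    simp only at ih ⊢
    rw [Finset.sum_range_succ, ih, hxae, hsucc, div_add_div _ _ (by positivity) (by positivity)]
    simp only [addFrac, Nat.cast_add, Nat.cast_mul, Nat.cast_pow, Nat.cast_ofNat, pow_add]
    ring

theorem PrimrecDyadic.primrecRel_dyadicInterval_subset {x y : ℕ → ℝ≥0} (hx : PrimrecDyadic x)
    (hy : PrimrecDyadic y) :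
    PrimrecRel fun (σ : Str) (j : ℕ) => dyadicInterval σ ⊆ Set.Ico (x j) (y j) := by
  obtain ⟨a, e, ha, he, hxae⟩ := hx
  obtain ⟨b, f, hb, hf, hybf⟩ := hy
  have hval : Primrec fun z : Str × ℕ => binVal z.1 := primrec_binVal.comp Primrec.fst
  have hlen : Primrec fun z : Str × ℕ => 2 ^ z.1.length :=
    primrec_two_pow.comp (Primrec.list_length.comp Primrec.fst)
  have hle : PrimrecPred fun z : Str × ℕ =>
      a z.2 * 2 ^ z.1.length ≤ binVal z.1 * 2 ^ e z.2 ∧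
        (binVal z.1 + 1) * 2 ^ f z.2 ≤ b z.2 * 2 ^ z.1.length :=
    (Primrec.nat_le.comp (Primrec.nat_mul.comp (ha.comp Primrec.snd) hlen)
      (Primrec.nat_mul.comp hval (primrec_two_pow.comp (he.comp Primrec.snd)))).and
    (Primrec.nat_le.comp
      (Primrec.nat_mul.comp (Primrec.succ.comp hval) (primrec_two_pow.comp (hf.comp Primrec.snd)))
      (Primrec.nat_mul.comp (hb.comp Primrec.snd) hlen))
  refine hle.of_eq fun z => ?_
  have hne := Set.nonempty_Ico.1 (nonempty_dyadicInterval z.1)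
  change _ ↔ Set.Ico _ _ ⊆ Set.Ico _ _
  rw [Set.Ico_subset_Ico_iff hne, hxae, hybf,
    div_le_div_iff₀ (by positivity) (by positivity),
    div_le_div_iff₀ (by positivity) (by positivity)]
  norm_cast

/-- The weight `2⁻ᵈ` of a request `(d, τ)`, which asks for a description of `τ` of length `d`.
The value `none` stands for the absence of a request. -/
noncomputable def weight (o : Option (ℕ × Str)) : ℝ≥0 := o.elim 0 fun q => 2⁻¹ ^ q.1

variable {r : ℕ → Option (ℕ × Str)}

theorem primrecDyadic_weight (hr : Primrec r) : PrimrecDyadic fun j => weight (r j) := by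
  refine ⟨fun j => ((r j).map fun _ => 1).getD 0, fun j => ((r j).map Prod.fst).getD 0,
    Primrec.option_getD.comp (Primrec.option_map hr (Primrec.const 1).to₂) (Primrec.const 0),
    Primrec.option_getD.comp (Primrec.option_map hr (Primrec.fst.comp Primrec.snd).to₂)
      (Primrec.const 0), fun j => ?_⟩
  cases hj : r j <;> simp [weight, hj]

/-- The interval of length `weight (r j)` set aside for the descriptions that answer the `j`-th
request; successive intervals are adjacent. -/
noncomputable def allotment (r : ℕ → Option (ℕ × Str)) (j : ℕ) : Set ℝ≥0 :=
  Set.Ico (∑ i ∈ Finset.range j, weight (r i)) (∑ i ∈ Finset.range (j + 1), weight (r i))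

theorem primrecRel_dyadicInterval_subset_allotment (hr : Primrec r) :
    PrimrecRel fun (σ : Str) (j : ℕ) => dyadicInterval σ ⊆ allotment r j :=
  have hsum := (primrecDyadic_weight hr).sum_range
  hsum.primrecRel_dyadicInterval_subset (hsum.comp Primrec.succ)

theorem eq_of_prefix_of_subset_allotment {σ ρ : Str} (h : σ <+: ρ) {i j : ℕ}
    (hσ : dyadicInterval σ ⊆ allotment r i) (hρ : dyadicInterval ρ ⊆ allotment r j) : i = j := by
  obtain ⟨x, hx⟩ := nonempty_dyadicInterval ρ
  have hmono : Monotone fun j => ∑ i ∈ Finset.range j, weight (r i) :=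
    fun _ _ h => Finset.sum_le_sum_of_subset (Finset.range_mono h)
  by_contra hij
  exact Set.disjoint_left.1 (hmono.pairwise_disjoint_on_Ico_succ hij)
    (hσ (dyadicInterval_subset_of_prefix h hx)) (hρ hx)

theorem exists_dyadicInterval_subset_allotment {j d : ℕ} {τ : Str} (hj : r j = some (d, τ))
    (hsum : ∑ i ∈ Finset.range (j + 1), weight (r i) ≤ 1) :
    ∃ σ : Str, σ.length = d + 1 ∧ dyadicInterval σ ⊆ allotment r j := by
  have hstep : ∑ i ∈ Finset.range (j + 1), weight (r i) =
      ∑ i ∈ Finset.range j, weight (r i) + 2⁻¹ ^ d := by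
    rw [Finset.sum_range_succ, hj, weight, Option.elim_some]
  rw [allotment, hstep]
  exact exists_dyadicInterval_subset (hstep ▸ hsum)

/-- The Kraft–Chaitin machine for a sequence `r` of requests: the descriptions of `τ` are the
strings `σ` of length `d + 1` whose dyadic interval lies in the allotment of a request `(d, τ)`. -/
noncomputable def kraftChaitinMachine (r : ℕ → Option (ℕ × Str)) : Str →. Str := fun σ =>
  Nat.rfindOpt fun j => (r j).bind fun q =>
    if σ.length = q.1 + 1 ∧ dyadicInterval σ ⊆ allotment r j then some q.2 else none

theorem mem_kraftChaitinMachine_iff {σ τ : Str} :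
    τ ∈ kraftChaitinMachine r σ ↔
      ∃ j d, r j = some (d, τ) ∧ σ.length = d + 1 ∧ dyadicInterval σ ⊆ allotment r j := by
  have hmem : ∀ j τ, ((r j).bind fun q =>
      if σ.length = q.1 + 1 ∧ dyadicInterval σ ⊆ allotment r j then some q.2 else none) = some τ ↔
      ∃ d, r j = some (d, τ) ∧ σ.length = d + 1 ∧ dyadicInterval σ ⊆ allotment r j := by
    intro j τ
    simp [Option.bind_eq_some_iff]
  refine (mem_rfindOpt_iff_of_unique fun i j τ ρ hi hj => ?_).trans (by simp only [hmem])
  obtain ⟨d, hi, -, hσi⟩ := (hmem i τ).1 hi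
  obtain ⟨e, hj, -, hσj⟩ := (hmem j ρ).1 hj
  obtain rfl := eq_of_prefix_of_subset_allotment List.prefix_rfl hσi hσj
  exact (Prod.ext_iff.1 (Option.some.inj (hi.symm.trans hj))).2

theorem isMachine_kraftChaitinMachine (hr : Primrec r) : IsMachine (kraftChaitinMachine r) := by
  have hanswers : PrimrecPred fun x : (Str × ℕ) × (ℕ × Str) =>
      x.1.1.length = x.2.1 + 1 ∧ dyadicInterval x.1.1 ⊆ allotment r x.1.2 :=
    (Primrec.eq.comp (Primrec.list_length.comp (Primrec.fst.comp Primrec.fst))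
      (Primrec.succ.comp (Primrec.fst.comp Primrec.snd))).and
    ((primrecRel_dyadicInterval_subset_allotment hr).comp (Primrec.fst.comp Primrec.fst)
      (Primrec.snd.comp Primrec.fst))
  exact Partrec.rfindOpt (Primrec.option_bind (hr.comp Primrec.snd) (Primrec.ite hanswers
    (Primrec.option_some.comp (Primrec.snd.comp Primrec.snd))
    (Primrec.const none)).to₂).to₂.to_comp

theorem prefixFree_dom_kraftChaitinMachine (r : ℕ → Option (ℕ × Str)) :
    PrefixFree {σ | (kraftChaitinMachine r σ).Dom} := by
  intro σ hσ ρ hρ h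
  obtain ⟨_, hσ⟩ := Part.dom_iff_mem.1 hσ
  obtain ⟨_, hρ⟩ := Part.dom_iff_mem.1 hρ
  obtain ⟨i, d, hi, hσlen, hσi⟩ := mem_kraftChaitinMachine_iff.1 hσ
  obtain ⟨j, e, hj, hρlen, hρj⟩ := mem_kraftChaitinMachine_iff.1 hρ
  obtain rfl := eq_of_prefix_of_subset_allotment h hσi hρj
  obtain ⟨rfl, -⟩ := Prod.ext_iff.1 (Option.some.inj (hi.symm.trans hj))
  exact h.eq_of_length (hσlen.trans hρlen.symm)

theorem cplx_kraftChaitinMachine_le (hsum : ∀ n, ∑ i ∈ Finset.range n, weight (r i) ≤ 1) {j d : ℕ}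
    {τ : Str} (hj : r j = some (d, τ)) : Cplx (kraftChaitinMachine r) τ ≤ d + 1 := by
  obtain ⟨σ, hlen, hσ⟩ := exists_dyadicInterval_subset_allotment hj (hsum _)
  have hmem : τ ∈ kraftChaitinMachine r σ := mem_kraftChaitinMachine_iff.2 ⟨j, d, hj, hlen, hσ⟩
  exact_mod_cast hlen ▸ cplx_le_length hmem

theorem sum_weight_le_tsum {D : Set (ℕ × Str)}
    (hinj : ∀ m n q, r m = some q → r n = some q → m = n) (hD : ∀ q, q ∈ D ↔ ∃ n, r n = some q)
    (n : ℕ) : (∑ i ∈ Finset.range n, weight (r i) : ℝ≥0) ≤ ∑' q : D, (2 : ℝ≥0∞)⁻¹ ^ q.1.1 := by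
  choose! e he using fun q (hq : q ∈ D) => (hD q).1 hq
  have he_inj : Function.Injective fun q : D => e q := fun p q h =>
    Subtype.ext (Option.some.inj ((he p p.2).symm.trans ((congrArg r h).trans (he q q.2))))
  have hsupp : (Function.support fun i => (weight (r i) : ℝ≥0∞)) ⊆ Set.range fun q : D => e q := by
    intro i hi
    cases hq : r i with
    | none => simp [weight, hq] at hi
    | some q =>
      have hqD : q ∈ D := (hD q).2 ⟨i, hq⟩
      exact ⟨⟨q, hqD⟩, hinj _ _ q (he q hqD) hq⟩
  calc ((∑ i ∈ Finset.range n, weight (r i) : ℝ≥0) : ℝ≥0∞)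
      ≤ ∑' i, (weight (r i) : ℝ≥0∞) := by
        rw [ENNReal.ofNNReal_finsetSum]
        exact ENNReal.sum_le_tsum _
    _ = ∑' q : D, (weight (r (e q)) : ℝ≥0∞) := (he_inj.tsum_eq hsupp).symm
    _ = ∑' q : D, (2 : ℝ≥0∞)⁻¹ ^ q.1.1 :=
        tsum_congr fun q => by simp [he q q.2, weight, ENNReal.coe_inv, ENNReal.inv_pow]

theorem CEPred.kraft_chaitin {D : Set (ℕ × Str)} (hD : CEPred (· ∈ D))
    (hsum : ∑' q : D, (2 : ℝ≥0∞)⁻¹ ^ q.1.1 ≤ 1) :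
    ∃ M, PrefixFreeMachine M ∧ ∀ q ∈ D, Cplx M q.2 ≤ q.1 + 1 := by
  obtain ⟨r, hr, hinj, hrD⟩ := hD.exists_primrec_enumeration
  refine ⟨kraftChaitinMachine r,
    ⟨isMachine_kraftChaitinMachine hr, prefixFree_dom_kraftChaitinMachine r⟩, fun q hq => ?_⟩
  obtain ⟨j, hj⟩ := (hrD q).1 hq
  exact cplx_kraftChaitinMachine_le (fun n => ENNReal.coe_le_one_iff.1
    ((sum_weight_le_tsum hinj hrD n).trans hsum)) hj

end KraftChaitin

section Tests

variable {μ : MeasureTheory.Measure Seq}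

/-- The requests `(d, σ)` with `d = |σ| - k`, for a string `σ` in the `(2k + 1)`-st set of the
family `V`: they ask for descriptions saving `k` bits. -/
def savingRequests (V : Set (ℕ × Str)) (k : ℕ) : Set (ℕ × Str) :=
  {q | q.1 + k = q.2.length ∧ (2 * k + 1, q.2) ∈ V}

theorem cePred_mem_iUnion_savingRequests {V : Set (ℕ × Str)} (hV : PrimrecPred (· ∈ V)) :
    CEPred (· ∈ ⋃ k, savingRequests V k) := by
  have hmem : PrimrecPred fun x : (ℕ × Str) × ℕ => x.1 ∈ savingRequests V x.2 :=
    (Primrec.eq.comp (Primrec.nat_add.comp (Primrec.fst.comp Primrec.fst) Primrec.snd)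
      (Primrec.list_length.comp (Primrec.snd.comp Primrec.fst))).and
    (hV.comp ((Primrec.nat_double_succ.comp Primrec.snd).pair (Primrec.snd.comp Primrec.fst)))
  exact REPred.of_eq (CEPred.exists hmem.computablePred.to_re) fun q => Set.mem_iUnion.symm

theorem FairCoin.tsum_savingRequests_le (hμ : FairCoin μ) {V : Set (ℕ × Str)} {k : ℕ}
    (hpf : PrefixFree {σ | (2 * k + 1, σ) ∈ V})
    (hle : μ (openClass {σ | (2 * k + 1, σ) ∈ V}) ≤ 2⁻¹ ^ (2 * k + 1)) :
    ∑' q : savingRequests V k, (2 : ℝ≥0∞)⁻¹ ^ q.1.1 ≤ 2⁻¹ ^ (k + 1) := by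
  let target : savingRequests V k → {σ | (2 * k + 1, σ) ∈ V} := fun q => ⟨q.1.2, q.2.2⟩
  have htarget : Function.Injective target := fun p q h => by
    have hsnd : p.1.2 = q.1.2 := congrArg Subtype.val h
    have hp := p.2.1
    have hq := q.2.1
    exact Subtype.ext (Prod.ext (by rw [hsnd] at hp; lia) hsnd)
  have hcancel : ∀ n, (2 : ℝ≥0∞) ^ k * 2⁻¹ ^ (n + k) = 2⁻¹ ^ n := fun n => by
    rw [pow_add, mul_left_comm, ← mul_pow, ENNReal.mul_inv_cancel two_ne_zero ENNReal.ofNat_ne_top,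
      one_pow, mul_one]
  calc ∑' q : savingRequests V k, (2 : ℝ≥0∞)⁻¹ ^ q.1.1
      = ∑' q : savingRequests V k, 2 ^ k * 2⁻¹ ^ (target q).1.length :=
        tsum_congr fun q => by rw [← hcancel, q.2.1]
    _ ≤ 2 ^ k * μ (openClass {σ | (2 * k + 1, σ) ∈ V}) := by
        rw [ENNReal.tsum_mul_left, hμ.measure_openClass hpf]
        gcongr
        exact ENNReal.tsum_comp_le_tsum_of_injective htarget
          fun σ => (2 : ℝ≥0∞)⁻¹ ^ σ.1.length
    _ ≤ 2 ^ k * 2⁻¹ ^ (k + 1 + k) := by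
        gcongr
        exact hle.trans_eq (by ring_nf)
    _ = 2⁻¹ ^ (k + 1) := hcancel _

theorem FairCoin.tsum_iUnion_savingRequests_le_one (hμ : FairCoin μ) {V : Set (ℕ × Str)}
    (hpf : ∀ i, PrefixFree {σ | (i, σ) ∈ V})
    (hle : ∀ i, μ (openClass {σ | (i, σ) ∈ V}) ≤ 2⁻¹ ^ i) :
    ∑' q : ⋃ k, savingRequests V k, (2 : ℝ≥0∞)⁻¹ ^ q.1.1 ≤ 1 :=
  calc ∑' q : ⋃ k, savingRequests V k, (2 : ℝ≥0∞)⁻¹ ^ q.1.1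
      ≤ ∑' k, ∑' q : savingRequests V k, (2 : ℝ≥0∞)⁻¹ ^ q.1.1 :=
        ENNReal.tsum_iUnion_le_tsum (fun q : ℕ × Str => (2 : ℝ≥0∞)⁻¹ ^ q.1) _
    _ ≤ ∑' k : ℕ, (2 : ℝ≥0∞)⁻¹ ^ (k + 1) :=
        ENNReal.tsum_le_tsum fun k => hμ.tsum_savingRequests_le (hpf _) (hle _)
    _ = 1 := by
        rw [ENNReal.tsum_geometric_add_one, ENNReal.one_sub_inv_two,
          ENNReal.mul_inv_cancel (by simp) (by simp)]

theorem MLTest.exists_primrecPred_prefixFree {T : ℕ → Set Seq} (hT : MLTest μ T) :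
    ∃ V : Set (ℕ × Str), PrimrecPred (· ∈ V) ∧ (∀ i, PrefixFree {σ | (i, σ) ∈ V}) ∧
      ∀ i, T i = openClass {σ | (i, σ) ∈ V} := by
  obtain ⟨W, hW, hTW, -⟩ := hT
  obtain ⟨V, hV, hVW⟩ := hW.exists_primrecPred_openClass_eq
  exact ⟨{x | x.2 ∈ minimalStrings {σ | (x.1, σ) ∈ V}}, primrecPred_mem_minimalStrings hV,
    fun i => prefixFree_minimalStrings _,
    fun i => (hTW i).trans ((hVW i).symm.trans (openClass_minimalStrings _).symm)⟩

theorem MLTest.exists_prefixFreeMachine (hμ : FairCoin μ) {T : ℕ → Set Seq} (hT : MLTest μ T) :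
    ∃ M, PrefixFreeMachine M ∧ ∀ A ∈ ⋂ i, T i, ¬ Incompressible M A := by
  obtain ⟨V, hV, hpf, hTV⟩ := hT.exists_primrecPred_prefixFree
  obtain ⟨-, -, -, hle⟩ := hT
  simp only [hTV] at hle
  obtain ⟨M, hM, hMV⟩ := (cePred_mem_iUnion_savingRequests hV).kraft_chaitin
    (hμ.tsum_iUnion_savingRequests_le_one hpf hle)
  refine ⟨M, hM, fun A hA ⟨c, hc⟩ => ?_⟩
  obtain ⟨n, hn⟩ : ∃ n, (2 * (c + 2) + 1, pre A n) ∈ V :=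
    mem_openClass_iff.1 (hTV _ ▸ Set.mem_iInter.1 hA _)
  have hlen : 2 * (c + 2) + 1 ≤ n := by
    have hcyl : cyl (pre A n) ⊆ openClass {σ | (2 * (c + 2) + 1, σ) ∈ V} :=
      Set.subset_biUnion_of_mem (u := cyl) hn
    simpa [length_pre] using
      hμ.le_length_of_measure_cyl_le ((MeasureTheory.measure_mono hcyl).trans (hle _))
  have hcplx : Cplx M (pre A n) ≤ (n - (c + 2) : ℕ) + 1 :=
    hMV (n - (c + 2), pre A n) (Set.mem_iUnion.2 ⟨c + 2, by simp only [length_pre]; lia, hn⟩)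
  have hcontra : (n : ℕ∞) ≤ (n - (c + 2) : ℕ) + 1 + c := (hc n).trans (by gcongr)
  norm_cast at hcontra
  lia

theorem mlRandom_iff_forall_incompressible (hμ : FairCoin μ) {A : Seq} :
    MLRandom μ A ↔ ∀ M, PrefixFreeMachine M → Incompressible M A := by
  refine ⟨fun hA M hM => hA.incompressible hμ hM, fun h T hT hA => ?_⟩
  obtain ⟨M, hM, hnot⟩ := hT.exists_prefixFreeMachine hμ
  exact hnot A hA (h M hM)

end Tests

/-- **Levin–Schnorr theorem**: `A ∈ 2^ω` is Martin-Löf random if and only if there is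
some `c ∈ ℕ` with `K(A↾n) ≥ n - c` for all `n` (stated as `n ≤ K(A↾n) + c`). -/
theorem levin_schnorr (μ : MeasureTheory.Measure Seq) (hμ : FairCoin μ)
    (U : Str →. Str) (hU : UniversalPFMachine U) (A : Seq) :
    MLRandom μ A ↔ ∃ c : ℕ, ∀ n : ℕ, (n : ℕ∞) ≤ Cplx U (pre A n) + c := by
  rw [mlRandom_iff_forall_incompressible hμ]
  exact ⟨fun h => h U hU.1, fun hA M hM => Incompressible.of_cplx_le_add hA (hU.2 M hM)⟩

end AR
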